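/- arXiv:1411.1303 — 10 statements merged into one kernel-verified Lean document; each statement's English description precedes it below -/
import Mathlib

section
/- Let λ : ℕ → ℕ be defined by λ_0 = 1 and λ_{k+1} = λ_k^2 + 1. Then for every k ≥ 0, λ_k ≤ 1.5180^(2^k), where the inequality is between real numbers; equivalently, (λ_k)^(1/2^k) ≤ 1.5180. -/
theorem lambda_rough_bound
    (l : ℕ → ℕ) (h0 : l 0 = 1) (hrec : ∀ k, l (k + 1) = (l k) ^ 2 + 1) :
    ∀ k : ℕ, (l k : ℝ) ≤ 1.5180 ^ (2 ^ k) := by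
  have h1 : l 1 = 2 := by rw [hrec 0, h0]; norm_num
  have h2 : l 2 = 5 := by rw [hrec 1, h1]; norm_num
  have h3 : l 3 = 26 := by rw [hrec 2, h2]; norm_num
  have key : ∀ k : ℕ, (1 : ℝ) ≤ l (k + 3) ∧ (l (k + 3) : ℝ) + 1 ≤ 1.5180 ^ (2 ^ (k + 3)) := by
    intro k
    induction k with
    | zero => rw [Nat.zero_add, h3]; norm_num
    | succ k ih =>
      obtain ⟨ha, hb⟩ := ih
      have hr : (l (k + 1 + 3) : ℝ) = (l (k + 3) : ℝ) ^ 2 + 1 := by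
        rw [show k + 1 + 3 = (k + 3) + 1 by ring, hrec (k + 3)]; push_cast; ring
      have hp : (1.5180 : ℝ) ^ (2 ^ (k + 1 + 3)) = (1.5180 ^ (2 ^ (k + 3))) ^ 2 := by
        rw [← pow_mul, ← pow_succ]
      rw [hr, hp]
      generalize (1.5180 : ℝ) ^ (2 ^ (k + 3)) = c at *
      constructor <;> nlinarith
  intro k
  match k with
  | 0 => rw [h0]; norm_num
  | 1 => rw [h1]; norm_num
  | 2 => rw [h2]; norm_num
  | k + 3 => linarith [(key k).2]
end

section
/- Let λ : ℕ → ℕ be defined by λ_0 = 1 and λ_{k+1} = λ_k^2 + 1. Then for every k ≥ 0, λ_k ≤ 1.50284^(2^k), where the inequality is between real numbers. -/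
theorem lambda_sharp_upper_bound
    (l : ℕ → ℕ) (h0 : l 0 = 1) (hrec : ∀ k, l (k + 1) = (l k) ^ 2 + 1) :
    ∀ k : ℕ, (l k : ℝ) ≤ 1.50284 ^ (2 ^ k) := by
  have h1 : l 1 = 2 := by rw [hrec 0, h0]; norm_num
  have h2 : l 2 = 5 := by rw [hrec 1, h1]; norm_num
  have h3 : l 3 = 26 := by rw [hrec 2, h2]; norm_num
  have h4 : l 4 = 677 := by rw [hrec 3, h3]; norm_num
  have h5 : l 5 = 458330 := by rw [hrec 4, h4]; norm_num
  -- from index 5 on, the stronger bound `l k + 1 ≤ c ^ (2 ^ k)` is inductive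
  have key : ∀ n : ℕ, (l (n + 5) : ℝ) + 1 ≤ 1.50284 ^ (2 ^ (n + 5)) := by
    intro n
    induction n with
    | zero => rw [Nat.zero_add, h5]; norm_num
    | succ n ih =>
      have e : n + 1 + 5 = (n + 5) + 1 := by ring
      rw [e, hrec, pow_succ 2 (n + 5), pow_mul]
      have hl : (1 : ℝ) ≤ (l (n + 5) : ℝ) := by
        have : 1 ≤ l (n + 5) := by
          rw [show n + 5 = (n + 4) + 1 from rfl, hrec]; omega
        exact_mod_cast this
      push_cast
      nlinarith
  intro k
  rcases Nat.lt_or_ge k 5 with hk | hk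
  · interval_cases k
    · rw [h0]; norm_num
    · rw [h1]; norm_num
    · rw [h2]; norm_num
    · rw [h3]; norm_num
    · rw [h4]; norm_num
  · obtain ⟨n, rfl⟩ := Nat.exists_eq_add_of_le' hk
    linarith [key n]
end

section
/- Let λ : ℕ → ℕ be defined by λ_0 = 1 and λ_{k+1} = λ_k^2 + 1. Then for every k ≥ 4, λ_k ≥ 1.5028^(2^k), where the inequality is between real numbers. -/
theorem lambda_lower_bound_15028
    (l : ℕ → ℕ) (h0 : l 0 = 1) (hrec : ∀ k, l (k + 1) = (l k) ^ 2 + 1) :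
    ∀ k, 4 ≤ k → (1.5028 : ℝ) ^ (2 ^ k) ≤ (l k : ℝ) := by
  intro k hk
  induction k, hk using Nat.le_induction with
  | base =>
    have h4 : l 4 = 677 := by
      rw [hrec 3, hrec 2, hrec 1, hrec 0, h0]
      norm_num
    rw [h4]
    norm_num
  | succ n _ ih =>
    rw [hrec n, pow_succ 2 n, pow_mul]
    push_cast
    have h : ((1.5028 : ℝ) ^ (2 ^ n)) ^ 2 ≤ (l n : ℝ) ^ 2 :=
      pow_le_pow_left₀ (by positivity) ih 2
    linarith
end

section
/- Let P : ℕ → ℕ satisfy P(2) = 1 and, for n ≥ 3, P(n) = max{ P(n₁)·P(n₂) + 1 : n₁ + n₂ = n + 1, n₁, n₂ ≥ 2 }. Then for every n ≥ 2, P(n) ≤ 1.50284^(n-1), where the inequality is between real numbers. -/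
set_option maxHeartbeats 2000000 in
theorem P_upper_bound
    (P : ℕ → ℕ) (hP2 : P 2 = 1)
    (hP : ∀ n, 3 ≤ n →
      P n = Finset.sup (Finset.Icc 2 (n - 1)) (fun m => P m * P (n + 1 - m) + 1)) :
    ∀ n, 2 ≤ n → (P n : ℝ) ≤ 1.50284 ^ (n - 1) := by
  -- strengthened claim, with constant slack 0.019
  suffices H : ∀ n, 2 ≤ n → (P n : ℝ) + 0.019 ≤ 1.50284 ^ (n - 1) by
    intro n hn
    have := H n hn
    linarith
  have hP3 : P 3 = 2 := by
    rw [hP 3 (by norm_num), show Finset.Icc 2 (3 - 1) = {2} from rfl]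
    simp [hP2]
  have hP4 : P 4 = 3 := by
    rw [hP 4 (by norm_num), show Finset.Icc 2 (4 - 1) = {2, 3} from rfl]
    simp [hP2, hP3]
  have hP5 : P 5 = 5 := by
    rw [hP 5 (by norm_num), show Finset.Icc 2 (5 - 1) = {2, 3, 4} from rfl]
    simp [hP2, hP3, hP4]
  have hP6 : P 6 = 7 := by
    rw [hP 6 (by norm_num), show Finset.Icc 2 (6 - 1) = {2, 3, 4, 5} from rfl]
    simp [hP2, hP3, hP4, hP5]
  have hP7 : P 7 = 11 := by
    rw [hP 7 (by norm_num), show Finset.Icc 2 (7 - 1) = {2, 3, 4, 5, 6} from rfl]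
    simp [hP2, hP3, hP4, hP5, hP6]
  have hP8 : P 8 = 16 := by
    rw [hP 8 (by norm_num), show Finset.Icc 2 (8 - 1) = {2, 3, 4, 5, 6, 7} from rfl]
    simp [hP2, hP3, hP4, hP5, hP6, hP7]
  have hP9 : P 9 = 26 := by
    rw [hP 9 (by norm_num), show Finset.Icc 2 (9 - 1) = {2, 3, 4, 5, 6, 7, 8} from rfl]
    simp [hP2, hP3, hP4, hP5, hP6, hP7, hP8]
  have hP10 : P 10 = 36 := by
    rw [hP 10 (by norm_num), show Finset.Icc 2 (10 - 1) = {2, 3, 4, 5, 6, 7, 8, 9} from rfl]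
    simp [hP2, hP3, hP4, hP5, hP6, hP7, hP8, hP9]
  have hP11 : P 11 = 56 := by
    rw [hP 11 (by norm_num), show Finset.Icc 2 (11 - 1) = {2, 3, 4, 5, 6, 7, 8, 9, 10} from rfl]
    simp [hP2, hP3, hP4, hP5, hP6, hP7, hP8, hP9, hP10]
  have hP12 : P 12 = 81 := by
    rw [hP 12 (by norm_num), show Finset.Icc 2 (12 - 1) = {2, 3, 4, 5, 6, 7, 8, 9, 10, 11} from rfl]
    simp [hP2, hP3, hP4, hP5, hP6, hP7, hP8, hP9, hP10, hP11]
  have hP13 : P 13 = 131 := by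
    rw [hP 13 (by norm_num), show Finset.Icc 2 (13 - 1) = {2, 3, 4, 5, 6, 7, 8, 9, 10, 11, 12} from rfl]
    simp [hP2, hP3, hP4, hP5, hP6, hP7, hP8, hP9, hP10, hP11, hP12]
  have hP14 : P 14 = 183 := by
    rw [hP 14 (by norm_num), show Finset.Icc 2 (14 - 1) = {2, 3, 4, 5, 6, 7, 8, 9, 10, 11, 12, 13} from rfl]
    simp [hP2, hP3, hP4, hP5, hP6, hP7, hP8, hP9, hP10, hP11, hP12, hP13]
  have hP15 : P 15 = 287 := by
    rw [hP 15 (by norm_num), show Finset.Icc 2 (15 - 1) = {2, 3, 4, 5, 6, 7, 8, 9, 10, 11, 12, 13, 14} from rfl]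
    simp [hP2, hP3, hP4, hP5, hP6, hP7, hP8, hP9, hP10, hP11, hP12, hP13, hP14]
  have hP16 : P 16 = 417 := by
    rw [hP 16 (by norm_num), show Finset.Icc 2 (16 - 1) = {2, 3, 4, 5, 6, 7, 8, 9, 10, 11, 12, 13, 14, 15} from rfl]
    simp [hP2, hP3, hP4, hP5, hP6, hP7, hP8, hP9, hP10, hP11, hP12, hP13, hP14, hP15]
  have hP17 : P 17 = 677 := by
    rw [hP 17 (by norm_num), show Finset.Icc 2 (17 - 1) = {2, 3, 4, 5, 6, 7, 8, 9, 10, 11, 12, 13, 14, 15, 16} from rfl]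
    simp [hP2, hP3, hP4, hP5, hP6, hP7, hP8, hP9, hP10, hP11, hP12, hP13, hP14, hP15, hP16]
  have hP18 : P 18 = 937 := by
    rw [hP 18 (by norm_num), show Finset.Icc 2 (18 - 1) = {2, 3, 4, 5, 6, 7, 8, 9, 10, 11, 12, 13, 14, 15, 16, 17} from rfl]
    simp [hP2, hP3, hP4, hP5, hP6, hP7, hP8, hP9, hP10, hP11, hP12, hP13, hP14, hP15, hP16, hP17]
  have hP19 : P 19 = 1457 := by
    rw [hP 19 (by norm_num), show Finset.Icc 2 (19 - 1) = {2, 3, 4, 5, 6, 7, 8, 9, 10, 11, 12, 13, 14, 15, 16, 17, 18} from rfl]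
    simp [hP2, hP3, hP4, hP5, hP6, hP7, hP8, hP9, hP10, hP11, hP12, hP13, hP14, hP15, hP16, hP17, hP18]
  have hP20 : P 20 = 2107 := by
    rw [hP 20 (by norm_num), show Finset.Icc 2 (20 - 1) = {2, 3, 4, 5, 6, 7, 8, 9, 10, 11, 12, 13, 14, 15, 16, 17, 18, 19} from rfl]
    simp [hP2, hP3, hP4, hP5, hP6, hP7, hP8, hP9, hP10, hP11, hP12, hP13, hP14, hP15, hP16, hP17, hP18, hP19]
  intro n
  induction n using Nat.strong_induction_on with
  | _ n ih =>
    intro hn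
    by_cases hsmall : n ≤ 20
    · interval_cases n <;> norm_num [hP2, hP3, hP4, hP5, hP6, hP7, hP8, hP9, hP10, hP11, hP12, hP13, hP14, hP15, hP16, hP17, hP18, hP19, hP20]
    · have hex : ∃ m ∈ Finset.Icc 2 (n - 1), P n = P m * P (n + 1 - m) + 1 := by
        rw [hP n (by omega)]
        exact Finset.exists_mem_eq_sup _ ⟨2, by simp; omega⟩ _
      obtain ⟨m, hm, hPn⟩ := hex
      rw [Finset.mem_Icc] at hm
      have h1 := ih m (by omega) hm.1
      have h2 := ih (n + 1 - m) (by omega) (by omega)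
      have hsplit : (1.50284 : ℝ) ^ (n - 1) =
          1.50284 ^ (m - 1) * 1.50284 ^ (n + 1 - m - 1) := by
        rw [← pow_add]
        congr 1
        omega
      have hbig : (54 : ℝ) ≤ 1.50284 ^ (m - 1) + 1.50284 ^ (n + 1 - m - 1) := by
        have key : ∀ k, 10 ≤ k → (54 : ℝ) ≤ 1.50284 ^ k := fun k hk =>
          le_trans (by norm_num) (pow_le_pow_right₀ (by norm_num : (1 : ℝ) ≤ 1.50284) hk)
        have p1 : (0 : ℝ) < 1.50284 ^ (m - 1) := by positivity
        have p2 : (0 : ℝ) < 1.50284 ^ (n + 1 - m - 1) := by positivity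
        by_cases h : 10 ≤ m - 1
        · have := key _ h
          linarith
        · have := key (n + 1 - m - 1) (by omega)
          linarith
      rw [hPn, hsplit]
      push_cast
      generalize (1.50284 : ℝ) ^ (m - 1) = x at *
      generalize (1.50284 : ℝ) ^ (n + 1 - m - 1) = y at *
      have a0 : (0 : ℝ) ≤ P m := Nat.cast_nonneg _
      have b0 : (0 : ℝ) ≤ P (n + 1 - m) := Nat.cast_nonneg _
      have hmul : (P m : ℝ) * P (n + 1 - m) ≤ (x - 0.019) * (y - 0.019) :=
        mul_le_mul (by linarith) (by linarith) b0 (by linarith)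
      nlinarith
end

section
/- Let P : ℕ → ℕ satisfy P(2) = 1 and, for n ≥ 3, P(n) = max{ P(n₁)·P(n₂) + 1 : n₁ + n₂ = n + 1, n₁, n₂ ≥ 2 }, and let C_x : ℕ → ℕ satisfy C_x(2) = 0 and, for n ≥ 3, C_x(n) = max{ P(n₁)·P(n₂) + C_x(n₁) + C_x(n₂) : n₁ + n₂ = n + 1, n₁, n₂ ≥ 2 }. Then for every n ≥ 3, C_x(n) ≤ n · P(n). -/
theorem Cx_le_n_mul_P
    (P : ℕ → ℕ) (hP2 : P 2 = 1)
    (hP : ∀ n, 3 ≤ n →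
      P n = Finset.sup (Finset.Icc 2 (n - 1)) (fun m => P m * P (n + 1 - m) + 1))
    (C : ℕ → ℕ) (hC2 : C 2 = 0)
    (hC : ∀ n, 3 ≤ n →
      C n = Finset.sup (Finset.Icc 2 (n - 1))
        (fun m => P m * P (n + 1 - m) + C m + C (n + 1 - m))) :
    ∀ n, 3 ≤ n → C n ≤ n * P n := by
  have hpos : ∀ n, 2 ≤ n → 1 ≤ P n ∧ (3 ≤ n → 2 ≤ P n) := by
    intro n
    induction n using Nat.strong_induction_on with
    | _ n ih =>
      intro hn
      rcases Nat.lt_or_ge n 3 with h | h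
      · have : n = 2 := by omega
        subst this
        exact ⟨by omega, fun h' => by omega⟩
      · have h1 : P 2 * P (n + 1 - 2) + 1 ≤ P n := by
          rw [hP n h]
          exact Finset.le_sup (f := fun m => P m * P (n + 1 - m) + 1)
            (Finset.mem_Icc.mpr ⟨le_refl 2, by omega⟩)
        have h2 := (ih (n + 1 - 2) (by omega) (by omega)).1
        rw [hP2] at h1
        exact ⟨by omega, fun _ => by omega⟩
  have key : ∀ n, 2 ≤ n → C n ≤ n * P n := by
    intro n
    induction n using Nat.strong_induction_on with
    | _ n ih =>
      intro hn
      rcases Nat.lt_or_ge n 3 with h | h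
      · have : n = 2 := by omega
        subst this
        omega
      · rw [hC n h]
        apply Finset.sup_le
        intro m hm
        rw [Finset.mem_Icc] at hm
        obtain ⟨hm2, hmn⟩ := hm
        have h1 : P m * P (n + 1 - m) + 1 ≤ P n := by
          rw [hP n h]
          exact Finset.le_sup (f := fun m => P m * P (n + 1 - m) + 1)
            (Finset.mem_Icc.mpr ⟨hm2, hmn⟩)
        obtain ⟨k, hk⟩ : ∃ k, n + 1 - m = k := ⟨_, rfl⟩
        have hk2 : 2 ≤ k := by omega
        have hnk : n + 1 = m + k := by omega
        have hm' := ih m (by omega) hm2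
        have hk' := ih k (by omega) hk2
        simp only [hk] at h1 ⊢
        have h3 := Nat.mul_le_mul_left n h1
        refine le_trans ?_ h3
        rcases Nat.lt_or_ge m 3 with hm3 | hm3
        · obtain rfl : m = 2 := by omega
          obtain rfl : n = k + 1 := by omega
          rw [hP2, hC2]
          nlinarith
        rcases Nat.lt_or_ge k 3 with hk3 | hk3
        · obtain rfl : k = 2 := by omega
          obtain rfl : n = m + 1 := by omega
          rw [hP2, hC2]
          nlinarith
        have ha := (hpos m hm2).2 hm3
        have hb := (hpos k hk2).2 hk3
        have e1 : 2 * P m ≤ P m * P k := by nlinarith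
        have e2 : 2 * P k ≤ P m * P k := by nlinarith
        have e3 := Nat.mul_le_mul_left m e1
        have e4 := Nat.mul_le_mul_left k e2
        have e5 : (n + 1) * (P m * P k) = (m + k) * (P m * P k) := by rw [hnk]
        have e6 := Nat.mul_le_mul_right (P m * P k) h
        nlinarith
  exact fun n hn => key n (by omega)
end

section
/- Let P : ℕ → ℕ satisfy P(2) = 1 and, for n ≥ 3, P(n) = max{ P(n₁)·P(n₂) + 1 : n₁ + n₂ = n + 1, n₁, n₂ ≥ 2 }, and let C_x : ℕ → ℕ satisfy C_x(2) = 0 and, for n ≥ 3, C_x(n) = max{ P(n₁)·P(n₂) + C_x(n₁) + C_x(n₂) : n₁ + n₂ = n + 1, n₁, n₂ ≥ 2 }. Then for every n ≥ 3, C_x(n) ≤ n · 1.50284^n, where the inequality is between real numbers. -/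
/-- Table of the values of `P n` for `n ≤ 33`. -/
def tabP : ℕ → ℕ := fun n => ([0, 0, 1, 2, 3, 5, 7, 11, 16, 26, 36, 56, 81, 131, 183, 287, 417, 677, 937, 1457, 2107, 3407, 4759, 7463, 10843, 17603, 24373, 37913, 54838, 88688, 123892, 194300, 282310, 458330] : List ℕ).getD n 0

set_option maxRecDepth 100000 in
theorem tabP_step : ∀ n ∈ Finset.Icc 3 33, ∀ m ∈ Finset.Icc 2 (n - 1),
    tabP m * tabP (n + 1 - m) + 1 ≤ tabP n := by
  decide

theorem tabP_small (n : ℕ) (h2 : 2 ≤ n) (hn : n ≤ 33) :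
    (tabP n : ℝ) ≤ (1.50284 : ℝ) ^ (n - 1) := by
  interval_cases n <;> norm_num [tabP]

theorem tabP_mid (n : ℕ) (h2 : 18 ≤ n) (hn : n ≤ 33) :
    (tabP n : ℝ) + 1 ≤ (1.50284 : ℝ) ^ (n - 1) := by
  interval_cases n <;> norm_num [tabP]

theorem P_le_tab (P : ℕ → ℕ) (hP2 : P 2 = 1)
    (hP : ∀ n, 3 ≤ n →
      P n = Finset.sup (Finset.Icc 2 (n - 1)) (fun m => P m * P (n + 1 - m) + 1)) :
    ∀ n, 2 ≤ n → n ≤ 33 → P n ≤ tabP n := by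
  intro n
  induction n using Nat.strong_induction_on with
  | _ n ih =>
    intro h2 hn
    rcases Nat.eq_or_lt_of_le h2 with h | h
    · subst h; rw [hP2]; decide
    · rw [hP n h]
      apply Finset.sup_le
      intro m hm
      refine le_trans ?_ (tabP_step n (Finset.mem_Icc.2 ⟨h, hn⟩) m hm)
      have hm' := Finset.mem_Icc.1 hm
      have := Nat.mul_le_mul (ih m (by omega) (by omega) (by omega))
        (ih (n + 1 - m) (by omega) (by omega) (by omega))
      exact Nat.add_le_add_right this 1

/-- The key step: a factor with slack one keeps the slack. -/
theorem step_aux (p q i j : ℕ) (hi : 1 ≤ i) (hj : 17 ≤ j)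
    (hp : (p : ℝ) ≤ (1.50284 : ℝ) ^ i) (hq : (q : ℝ) + 1 ≤ (1.50284 : ℝ) ^ j) :
    (p : ℝ) * q + 1 + 1 ≤ (1.50284 : ℝ) ^ (i + j) := by
  rw [pow_add]
  have ha : (1.50284 : ℝ) ≤ (1.50284 : ℝ) ^ i := le_self_pow₀ (by norm_num) (by omega)
  have hb : (2 : ℝ) ≤ (1.50284 : ℝ) ^ j :=
    le_trans (by norm_num) (pow_le_pow_right₀ (by norm_num : (1 : ℝ) ≤ 1.50284) hj)
  generalize (1.50284 : ℝ) ^ i = a at *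
  generalize (1.50284 : ℝ) ^ j = b at *
  have hq0 : (0 : ℝ) ≤ q := Nat.cast_nonneg q
  have hp0 : (0 : ℝ) ≤ p := Nat.cast_nonneg p
  rcases Nat.lt_or_ge p 2 with h | h
  · have : (p : ℝ) ≤ 1 := by exact_mod_cast (by omega : p ≤ 1)
    nlinarith
  · have : (2 : ℝ) ≤ p := by exact_mod_cast h
    nlinarith

theorem P_bound (P : ℕ → ℕ) (hP2 : P 2 = 1)
    (hP : ∀ n, 3 ≤ n →
      P n = Finset.sup (Finset.Icc 2 (n - 1)) (fun m => P m * P (n + 1 - m) + 1)) :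
    ∀ n, 2 ≤ n → (P n : ℝ) ≤ (1.50284 : ℝ) ^ (n - 1) ∧
      (18 ≤ n → (P n : ℝ) + 1 ≤ (1.50284 : ℝ) ^ (n - 1)) := by
  intro n
  induction n using Nat.strong_induction_on with
  | _ n ih =>
    intro h2
    rcases Nat.lt_or_ge 33 n with hn | hn
    · have key : (P n : ℝ) + 1 ≤ (1.50284 : ℝ) ^ (n - 1) := by
        obtain ⟨m, hm, he⟩ := Finset.exists_mem_eq_sup (Finset.Icc 2 (n - 1))
          ⟨2, Finset.mem_Icc.2 ⟨le_refl 2, by omega⟩⟩ (fun m => P m * P (n + 1 - m) + 1)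
        rw [hP n (by omega), he]
        have hm' := Finset.mem_Icc.1 hm
        have h1 := ih m (by omega) (by omega)
        have h3 := ih (n + 1 - m) (by omega) (by omega)
        push_cast
        rcases Nat.lt_or_ge m 18 with hlt | hge
        · have := step_aux (P m) (P (n + 1 - m)) (m - 1) (n + 1 - m - 1) (by omega) (by omega)
            h1.1 (h3.2 (by omega))
          rwa [show m - 1 + (n + 1 - m - 1) = n - 1 by omega] at this
        · have := step_aux (P (n + 1 - m)) (P m) (n + 1 - m - 1) (m - 1) (by omega) (by omega)
            h3.1 (h1.2 hge)
          rwa [show n + 1 - m - 1 + (m - 1) = n - 1 by omega, mul_comm (P (n + 1 - m) : ℝ)] at this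
      exact ⟨by linarith, fun _ => key⟩
    · have h := P_le_tab P hP2 hP n h2 hn
      have h' : (P n : ℝ) ≤ tabP n := by exact_mod_cast h
      exact ⟨h'.trans (tabP_small n h2 hn), fun h18 => by linarith [tabP_mid n h18 hn]⟩

theorem Cx_upper_bound
    (P : ℕ → ℕ) (hP2 : P 2 = 1)
    (hP : ∀ n, 3 ≤ n →
      P n = Finset.sup (Finset.Icc 2 (n - 1)) (fun m => P m * P (n + 1 - m) + 1))
    (C : ℕ → ℕ) (hC2 : C 2 = 0)
    (hC : ∀ n, 3 ≤ n →
      C n = Finset.sup (Finset.Icc 2 (n - 1))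
        (fun m => P m * P (n + 1 - m) + C m + C (n + 1 - m))) :
    ∀ n, 3 ≤ n → (C n : ℝ) ≤ (n : ℝ) * 1.50284 ^ n := by
  have hb := P_bound P hP2 hP
  have main : ∀ n, 2 ≤ n → (C n : ℝ) ≤ ((n : ℝ) - 2) * 1.50284 ^ (n - 1) := by
    intro n
    induction n using Nat.strong_induction_on with
    | _ n ih =>
      intro h2
      rcases Nat.eq_or_lt_of_le h2 with h | h
      · subst h; simp [hC2]
      · obtain ⟨m, hm, he⟩ := Finset.exists_mem_eq_sup (Finset.Icc 2 (n - 1))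
          ⟨2, Finset.mem_Icc.2 ⟨le_refl 2, by omega⟩⟩
          (fun m => P m * P (n + 1 - m) + C m + C (n + 1 - m))
        rw [hC n h, he]
        have hm' := Finset.mem_Icc.1 hm
        obtain ⟨k, hk⟩ : ∃ k, n + 1 - m = k := ⟨_, rfl⟩
        have hn : (n : ℝ) = m + k - 1 := by
          have : n + 1 = m + k := by omega
          have : (n : ℝ) + 1 = m + k := by exact_mod_cast this
          linarith
        have hm2 : (2 : ℝ) ≤ m := by exact_mod_cast hm'.1
        have hk2 : (2 : ℝ) ≤ k := by exact_mod_cast (by omega : 2 ≤ k)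
        simp only [hk]
        push_cast
        have p1 := (hb m (by omega)).1
        have p2 := (hb k (by omega)).1
        have c1 := ih m (by omega) (by omega)
        have c2 := ih k (by omega) (by omega)
        have e : (1.50284 : ℝ) ^ (n - 1) = 1.50284 ^ (m - 1) * 1.50284 ^ (k - 1) := by
          rw [← pow_add]; congr 1; omega
        have l1 : (1.50284 : ℝ) ^ (m - 1) ≤ 1.50284 ^ (n - 1) :=
          pow_le_pow_right₀ (by norm_num) (by omega)
        have l2 : (1.50284 : ℝ) ^ (k - 1) ≤ 1.50284 ^ (n - 1) :=
          pow_le_pow_right₀ (by norm_num) (by omega)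
        have pp : (P m : ℝ) * P k ≤ 1.50284 ^ (n - 1) := by
          rw [e]; exact mul_le_mul p1 p2 (Nat.cast_nonneg _) (by positivity)
        have d1 := mul_le_mul_of_nonneg_left l1 (by linarith : (0 : ℝ) ≤ m - 2)
        have d2 := mul_le_mul_of_nonneg_left l2 (by linarith : (0 : ℝ) ≤ k - 2)
        rw [hn]
        have : (0 : ℝ) ≤ 1.50284 ^ (n - 1) := by positivity
        linarith
  intro n hn
  refine (main n (by omega)).trans ?_
  have : (1.50284 : ℝ) ^ (n - 1) ≤ 1.50284 ^ n := pow_le_pow_right₀ (by norm_num) (by omega)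
  have h3 : (3 : ℝ) ≤ n := by exact_mod_cast hn
  exact mul_le_mul (by linarith) this (by positivity) (by linarith)
end

section
/- Let α : ℕ → ℕ be defined by α_i = 2^i + i + 1. Then 677^(1/16) · exp( ∑_{i=4}^{∞} 2^(-α_i) ) ≤ 1.50284, where the sum is a convergent series of real numbers. -/
theorem fact_2
    (α : ℕ → ℕ) (hα : ∀ i, α i = 2 ^ i + i + 1) :
    (677 : ℝ) ^ ((1 : ℝ) / 16) *
      Real.exp (∑' i : ℕ, (2 : ℝ) ^ (-(α (i + 4) : ℤ))) ≤ 1.50284 := by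
  have h1 : (677 : ℝ) ^ ((1 : ℝ) / 16) ≤ 1.502837 := by
    have h : (677 : ℝ) ≤ (1.502837 : ℝ) ^ (16 : ℕ) := by norm_num
    calc (677 : ℝ) ^ ((1 : ℝ) / 16)
        ≤ ((1.502837 : ℝ) ^ (16 : ℕ)) ^ ((1 : ℝ) / 16) :=
          Real.rpow_le_rpow (by norm_num) h (by norm_num)
      _ = 1.502837 := by
          rw [← Real.rpow_natCast, ← Real.rpow_mul (by norm_num)]
          norm_num
  have hg : HasSum (fun i : ℕ => (1 / 2 : ℝ) ^ 21 * (1 / 2) ^ i) ((1 / 2 : ℝ) ^ 21 * 2) :=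
    hasSum_geometric_two.mul_left _
  have hle : ∀ i : ℕ, (2 : ℝ) ^ (-(α (i + 4) : ℤ)) ≤ (1 / 2 : ℝ) ^ 21 * (1 / 2) ^ i := by
    intro i
    rw [zpow_neg, zpow_natCast, ← inv_pow, ← one_div, ← pow_add]
    apply pow_le_pow_of_le_one (by norm_num) (by norm_num)
    rw [hα]
    have : 1 ≤ 2 ^ i := Nat.one_le_two_pow
    rw [pow_add]
    omega
  have hs : Summable (fun i : ℕ => (2 : ℝ) ^ (-(α (i + 4) : ℤ))) :=
    Summable.of_nonneg_of_le (fun i => by positivity) hle hg.summable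
  have h2 : (∑' i : ℕ, (2 : ℝ) ^ (-(α (i + 4) : ℤ))) ≤ (1 / 2 : ℝ) ^ 21 * 2 :=
    hasSum_le hle hs.hasSum hg
  have h3 : Real.exp ((1 / 2 : ℝ) ^ 21 * 2) ≤ 1.000001 := by
    have h := Real.add_one_le_exp (-((1 / 2 : ℝ) ^ 21 * 2))
    rw [Real.exp_neg] at h
    have h4 : (1.000001 : ℝ)⁻¹ ≤ (Real.exp ((1 / 2 : ℝ) ^ 21 * 2))⁻¹ :=
      le_trans (by norm_num) h
    exact (inv_le_inv₀ (by norm_num) (Real.exp_pos _)).1 h4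
  calc _ ≤ (1.502837 : ℝ) * 1.000001 :=
        mul_le_mul h1 ((Real.exp_le_exp.2 h2).trans h3) (Real.exp_pos _).le (by norm_num)
    _ ≤ 1.50284 := by norm_num
end

section
/- Let P : ℕ → ℕ satisfy P(2) = 1 and, for n ≥ 3, P(n) = max{ P(n₁)·P(n₂) + 1 : n₁ + n₂ = n + 1, n₁, n₂ ≥ 2 }. Then P(9) = 26 and for every n with 2 ≤ n ≤ 16, P(n)^(1/(n-1)) ≤ 26^(1/8), where the exponentiation and inequality are in the real numbers; that is, the maximum of P(n)^(1/(n-1)) over 2 ≤ n ≤ 16 equals 26^(1/8). -/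
theorem fact_basis1
    (P : ℕ → ℕ) (hP2 : P 2 = 1)
    (hP : ∀ n, 3 ≤ n →
      P n = Finset.sup (Finset.Icc 2 (n - 1)) (fun m => P m * P (n + 1 - m) + 1)) :
    P 9 = 26 ∧ ∀ n, 2 ≤ n → n ≤ 16 →
      (P n : ℝ) ^ ((1 : ℝ) / ((n : ℝ) - 1)) ≤ (26 : ℝ) ^ ((1 : ℝ) / 8) := by
  have h3 : P 3 = 2 := by
    rw [hP 3 (by norm_num), show Finset.Icc 2 (3 - 1) = ({2} : Finset ℕ) by decide]
    simp [hP2]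
  have h4 : P 4 = 3 := by
    rw [hP 4 (by norm_num), show Finset.Icc 2 (4 - 1) = ({2, 3} : Finset ℕ) by decide]
    simp [hP2, h3]
  have h5 : P 5 = 5 := by
    rw [hP 5 (by norm_num), show Finset.Icc 2 (5 - 1) = ({2, 3, 4} : Finset ℕ) by decide]
    simp [hP2, h3, h4]
  have h6 : P 6 = 7 := by
    rw [hP 6 (by norm_num), show Finset.Icc 2 (6 - 1) = ({2, 3, 4, 5} : Finset ℕ) by decide]
    simp [hP2, h3, h4, h5]
  have h7 : P 7 = 11 := by
    rw [hP 7 (by norm_num), show Finset.Icc 2 (7 - 1) = ({2, 3, 4, 5, 6} : Finset ℕ) by decide]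
    simp [hP2, h3, h4, h5, h6]
  have h8 : P 8 = 16 := by
    rw [hP 8 (by norm_num), show Finset.Icc 2 (8 - 1) = ({2, 3, 4, 5, 6, 7} : Finset ℕ) by decide]
    simp [hP2, h3, h4, h5, h6, h7]
  have h9 : P 9 = 26 := by
    rw [hP 9 (by norm_num), show Finset.Icc 2 (9 - 1) = ({2, 3, 4, 5, 6, 7, 8} : Finset ℕ) by decide]
    simp [hP2, h3, h4, h5, h6, h7, h8]
  have h10 : P 10 = 36 := by
    rw [hP 10 (by norm_num), show Finset.Icc 2 (10 - 1) = ({2, 3, 4, 5, 6, 7, 8, 9} : Finset ℕ) by decide]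
    simp [hP2, h3, h4, h5, h6, h7, h8, h9]
  have h11 : P 11 = 56 := by
    rw [hP 11 (by norm_num), show Finset.Icc 2 (11 - 1) = ({2, 3, 4, 5, 6, 7, 8, 9, 10} : Finset ℕ) by decide]
    simp [hP2, h3, h4, h5, h6, h7, h8, h9, h10]
  have h12 : P 12 = 81 := by
    rw [hP 12 (by norm_num), show Finset.Icc 2 (12 - 1) = ({2, 3, 4, 5, 6, 7, 8, 9, 10, 11} : Finset ℕ) by decide]
    simp [hP2, h3, h4, h5, h6, h7, h8, h9, h10, h11]
  have h13 : P 13 = 131 := by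
    rw [hP 13 (by norm_num), show Finset.Icc 2 (13 - 1) = ({2, 3, 4, 5, 6, 7, 8, 9, 10, 11, 12} : Finset ℕ) by decide]
    simp [hP2, h3, h4, h5, h6, h7, h8, h9, h10, h11, h12]
  have h14 : P 14 = 183 := by
    rw [hP 14 (by norm_num), show Finset.Icc 2 (14 - 1) = ({2, 3, 4, 5, 6, 7, 8, 9, 10, 11, 12, 13} : Finset ℕ) by decide]
    simp [hP2, h3, h4, h5, h6, h7, h8, h9, h10, h11, h12, h13]
  have h15 : P 15 = 287 := by
    rw [hP 15 (by norm_num), show Finset.Icc 2 (15 - 1) = ({2, 3, 4, 5, 6, 7, 8, 9, 10, 11, 12, 13, 14} : Finset ℕ) by decide]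
    simp [hP2, h3, h4, h5, h6, h7, h8, h9, h10, h11, h12, h13, h14]
  have h16 : P 16 = 417 := by
    rw [hP 16 (by norm_num), show Finset.Icc 2 (16 - 1) = ({2, 3, 4, 5, 6, 7, 8, 9, 10, 11, 12, 13, 14, 15} : Finset ℕ) by decide]
    simp [hP2, h3, h4, h5, h6, h7, h8, h9, h10, h11, h12, h13, h14, h15]
  refine ⟨h9, fun n hn hn' => ?_⟩
  have key : P n ^ 8 ≤ 26 ^ (n - 1) := by
    interval_cases n <;> simp [hP2, h3, h4, h5, h6, h7, h8, h9, h10, h11, h12, h13, h14, h15, h16]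
  obtain ⟨k, rfl⟩ : ∃ k, n = k + 1 := ⟨n - 1, by omega⟩
  have hk : (0 : ℝ) < k := by
    have : 0 < k := by omega
    exact_mod_cast this
  have key' : (P (k + 1) : ℝ) ^ (8 : ℕ) ≤ (26 : ℝ) ^ k := by
    exact_mod_cast key
  have h0 : (0 : ℝ) ≤ P (k + 1) := Nat.cast_nonneg _
  have e := Real.rpow_le_rpow (by positivity) key' (z := 1 / (8 * (k : ℝ))) (by positivity)
  rw [← Real.rpow_natCast, ← Real.rpow_natCast, ← Real.rpow_mul h0,
    ← Real.rpow_mul (by norm_num)] at e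
  convert e using 2
  · push_cast
    rw [add_sub_cancel_right]
    field_simp
  · field_simp
end

section
/- Let P : ℕ → ℕ satisfy P(2) = 1 and, for n ≥ 3, P(n) = max{ P(n₁)·P(n₂) + 1 : n₁ + n₂ = n + 1, n₁, n₂ ≥ 2 }. Then P(17) = 677 and for every n with 17 ≤ n ≤ 32, P(n)^(1/(n-1)) ≤ 677^(1/16), where the exponentiation and inequality are in the real numbers; that is, the maximum of P(n)^(1/(n-1)) over 17 ≤ n ≤ 32 equals 677^(1/16). -/
/-- The values of `P` up to `32`. -/
def ptable : List ℕ := [0, 0, 1, 2, 3, 5, 7, 11, 16, 26, 36, 56, 81, 131, 183, 287, 417, 677, 937, 1457, 2107, 3407, 4759, 7463, 10843, 17603, 24373, 37913, 54838, 88688, 123892, 194300, 282310]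

def pval (n : ℕ) : ℕ := ptable.getD n 0

lemma pval_rec : ∀ n ∈ Finset.Icc 3 32,
    pval n = Finset.sup (Finset.Icc 2 (n - 1)) (fun m => pval m * pval (n + 1 - m) + 1) := by
  decide +kernel

lemma pval_bound : ∀ n ∈ Finset.Icc 17 32, pval n ^ 16 ≤ 677 ^ (n - 1) := by
  decide +kernel

theorem fact_basis2
    (P : ℕ → ℕ) (hP2 : P 2 = 1)
    (hP : ∀ n, 3 ≤ n →
      P n = Finset.sup (Finset.Icc 2 (n - 1)) (fun m => P m * P (n + 1 - m) + 1)) :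
    P 17 = 677 ∧ ∀ n, 17 ≤ n → n ≤ 32 →
      (P n : ℝ) ^ ((1 : ℝ) / ((n : ℝ) - 1)) ≤ (677 : ℝ) ^ ((1 : ℝ) / 16) := by
  have key : ∀ n, 2 ≤ n → n ≤ 32 → P n = pval n := by
    intro n
    induction n using Nat.strong_induction_on with
    | _ n ih =>
      intro h2 h32
      rcases Nat.lt_or_ge n 3 with h | h
      · obtain rfl : n = 2 := by omega
        rw [hP2]; rfl
      · rw [hP n h, pval_rec n (Finset.mem_Icc.2 ⟨h, h32⟩)]
        refine Finset.sup_congr rfl fun m hm => ?_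
        rw [Finset.mem_Icc] at hm
        rw [ih m (by omega) (by omega) (by omega),
          ih (n + 1 - m) (by omega) (by omega) (by omega)]
  refine ⟨by rw [key 17 (by norm_num) (by norm_num)]; rfl, fun n h17 h32 => ?_⟩
  have hb := pval_bound n (Finset.mem_Icc.2 ⟨h17, h32⟩)
  rw [← key n (by omega) h32] at hb
  have hbR : (P n : ℝ) ^ 16 ≤ (677 : ℝ) ^ (n - 1) := by exact_mod_cast hb
  have hcast : ((n - 1 : ℕ) : ℝ) = (n : ℝ) - 1 := by
    rw [Nat.cast_sub (by omega)]; simp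
  have hpos : (0 : ℝ) < (n : ℝ) - 1 := by
    rw [← hcast]; exact_mod_cast (by omega : 0 < n - 1)
  have hP0 : (0 : ℝ) ≤ (P n : ℝ) := Nat.cast_nonneg _
  have h1 : (P n : ℝ) ≤ (677 : ℝ) ^ (((n : ℝ) - 1) / 16) := by
    have h := Real.rpow_le_rpow (by positivity) hbR (by norm_num : (0 : ℝ) ≤ 1 / 16)
    rw [← Real.rpow_natCast, ← Real.rpow_natCast, ← Real.rpow_mul hP0,
      ← Real.rpow_mul (by norm_num), hcast] at h
    norm_num at h
    simpa [div_eq_mul_inv] using h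
  calc (P n : ℝ) ^ ((1 : ℝ) / ((n : ℝ) - 1))
      ≤ ((677 : ℝ) ^ (((n : ℝ) - 1) / 16)) ^ ((1 : ℝ) / ((n : ℝ) - 1)) :=
        Real.rpow_le_rpow hP0 h1 (by positivity)
    _ = (677 : ℝ) ^ ((1 : ℝ) / 16) := by
        rw [← Real.rpow_mul (by norm_num)]
        congr 1
        field_simp
end

section
/- Let P : ℕ → ℕ satisfy P(2) = 1 and, for n ≥ 3, P(n) = max{ P(n₁)·P(n₂) + 1 : n₁ + n₂ = n + 1, n₁, n₂ ≥ 2 }. Then for every n with 2 ≤ n ≤ 16, P(n) · exp( P(n)^(-1) · 677^(-(33-n)/16) ) ≤ 677^((n-1)/16), where the exponentiations and inequality are in the real numbers. -/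
/-- Replace `exp t` by `1 / (1 - t)` with `t ≤ 1 / (677 p)`, and take 16th powers. -/
lemma fact_case1_aux (p : ℝ) (n : ℕ) (hp : 1 ≤ p) (hn2 : 2 ≤ n) (hn : n ≤ 16)
    (h : (677 * p ^ 2 / (677 * p - 1)) ^ 16 ≤ (677 : ℝ) ^ (n - 1)) :
    p * Real.exp (p⁻¹ * (677 : ℝ) ^ (-((33 - (n : ℝ)) / 16))) ≤
      (677 : ℝ) ^ (((n : ℝ) - 1) / 16) := by
  have hnr : (n : ℝ) ≤ 16 := by exact_mod_cast hn
  have hp0 : 0 < p := by linarith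
  have h1 : (677 : ℝ) ^ (-((33 - (n : ℝ)) / 16)) ≤ 677⁻¹ := by
    rw [← Real.rpow_neg_one]
    exact Real.rpow_le_rpow_of_exponent_le (by norm_num) (by linarith)
  have h2 : p⁻¹ * (677 : ℝ) ^ (-((33 - (n : ℝ)) / 16)) ≤ p⁻¹ * 677⁻¹ :=
    mul_le_mul_of_nonneg_left h1 (by positivity)
  have hd : 0 < 677 * p - 1 := by linarith
  have h3 : Real.exp (p⁻¹ * 677⁻¹) ≤ 677 * p / (677 * p - 1) := by
    have h4 := Real.add_one_le_exp (-(p⁻¹ * 677⁻¹))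
    rw [Real.exp_neg] at h4
    have h5 : -(p⁻¹ * 677⁻¹) + 1 = (677 * p / (677 * p - 1))⁻¹ := by
      field_simp
      ring
    rw [h5] at h4
    exact (inv_le_inv₀ (by positivity) (Real.exp_pos _)).1 h4
  have h6 : p * Real.exp (p⁻¹ * (677 : ℝ) ^ (-((33 - (n : ℝ)) / 16))) ≤
      677 * p ^ 2 / (677 * p - 1) := by
    calc _ ≤ p * (677 * p / (677 * p - 1)) :=
          mul_le_mul_of_nonneg_left ((Real.exp_le_exp.2 h2).trans h3) hp0.le
      _ = _ := by ring
  refine h6.trans (le_of_pow_le_pow_left₀ (n := 16) (by norm_num) (by positivity) (h.trans_eq ?_))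
  rw [← Real.rpow_mul_natCast (by norm_num), ← Real.rpow_natCast, Nat.cast_sub (by omega)]
  congr 1
  push_cast
  ring

theorem fact_case1
    (P : ℕ → ℕ) (hP2 : P 2 = 1)
    (hP : ∀ n, 3 ≤ n →
      P n = Finset.sup (Finset.Icc 2 (n - 1)) (fun m => P m * P (n + 1 - m) + 1)) :
    ∀ n, 2 ≤ n → n ≤ 16 →
      (P n : ℝ) * Real.exp ((P n : ℝ)⁻¹ * (677 : ℝ) ^ (-((33 - (n : ℝ)) / 16))) ≤
        (677 : ℝ) ^ (((n : ℝ) - 1) / 16) := by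
  have h3 : P 3 = 2 := by
    rw [hP 3 (by norm_num), show Finset.Icc 2 (3 - 1) = ({2} : Finset ℕ) from rfl]
    simp [hP2]
  have h4 : P 4 = 3 := by
    rw [hP 4 (by norm_num), show Finset.Icc 2 (4 - 1) = ({2, 3} : Finset ℕ) from rfl]
    simp [hP2, h3]
  have h5 : P 5 = 5 := by
    rw [hP 5 (by norm_num), show Finset.Icc 2 (5 - 1) = ({2, 3, 4} : Finset ℕ) from rfl]
    simp [hP2, h3, h4]
  have h6 : P 6 = 7 := by
    rw [hP 6 (by norm_num), show Finset.Icc 2 (6 - 1) = ({2, 3, 4, 5} : Finset ℕ) from rfl]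
    simp [hP2, h3, h4, h5]
  have h7 : P 7 = 11 := by
    rw [hP 7 (by norm_num), show Finset.Icc 2 (7 - 1) = ({2, 3, 4, 5, 6} : Finset ℕ) from rfl]
    simp [hP2, h3, h4, h5, h6]
  have h8 : P 8 = 16 := by
    rw [hP 8 (by norm_num), show Finset.Icc 2 (8 - 1) = ({2, 3, 4, 5, 6, 7} : Finset ℕ) from rfl]
    simp [hP2, h3, h4, h5, h6, h7]
  have h9 : P 9 = 26 := by
    rw [hP 9 (by norm_num), show Finset.Icc 2 (9 - 1) = ({2, 3, 4, 5, 6, 7, 8} : Finset ℕ) from rfl]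
    simp [hP2, h3, h4, h5, h6, h7, h8]
  have h10 : P 10 = 36 := by
    rw [hP 10 (by norm_num), show Finset.Icc 2 (10 - 1) = ({2, 3, 4, 5, 6, 7, 8, 9} : Finset ℕ) from rfl]
    simp [hP2, h3, h4, h5, h6, h7, h8, h9]
  have h11 : P 11 = 56 := by
    rw [hP 11 (by norm_num), show Finset.Icc 2 (11 - 1) = ({2, 3, 4, 5, 6, 7, 8, 9, 10} : Finset ℕ) from rfl]
    simp [hP2, h3, h4, h5, h6, h7, h8, h9, h10]
  have h12 : P 12 = 81 := by
    rw [hP 12 (by norm_num), show Finset.Icc 2 (12 - 1) = ({2, 3, 4, 5, 6, 7, 8, 9, 10, 11} : Finset ℕ) from rfl]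
    simp [hP2, h3, h4, h5, h6, h7, h8, h9, h10, h11]
  have h13 : P 13 = 131 := by
    rw [hP 13 (by norm_num), show Finset.Icc 2 (13 - 1) = ({2, 3, 4, 5, 6, 7, 8, 9, 10, 11, 12} : Finset ℕ) from rfl]
    simp [hP2, h3, h4, h5, h6, h7, h8, h9, h10, h11, h12]
  have h14 : P 14 = 183 := by
    rw [hP 14 (by norm_num), show Finset.Icc 2 (14 - 1) = ({2, 3, 4, 5, 6, 7, 8, 9, 10, 11, 12, 13} : Finset ℕ) from rfl]
    simp [hP2, h3, h4, h5, h6, h7, h8, h9, h10, h11, h12, h13]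
  have h15 : P 15 = 287 := by
    rw [hP 15 (by norm_num), show Finset.Icc 2 (15 - 1) = ({2, 3, 4, 5, 6, 7, 8, 9, 10, 11, 12, 13, 14} : Finset ℕ) from rfl]
    simp [hP2, h3, h4, h5, h6, h7, h8, h9, h10, h11, h12, h13, h14]
  have h16 : P 16 = 417 := by
    rw [hP 16 (by norm_num), show Finset.Icc 2 (16 - 1) = ({2, 3, 4, 5, 6, 7, 8, 9, 10, 11, 12, 13, 14, 15} : Finset ℕ) from rfl]
    simp [hP2, h3, h4, h5, h6, h7, h8, h9, h10, h11, h12, h13, h14, h15]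
  intro n hn2 hn
  have hval := fact_case1_aux (P n : ℝ) n
  interval_cases n <;>
    simp only [hP2, h3, h4, h5, h6, h7, h8, h9, h10, h11, h12, h13, h14, h15, h16] at hval ⊢ <;>
    exact hval (by norm_num) (by norm_num) (by norm_num) (by norm_num)
end
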